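/- For every finite simple graph G on vertex set [n] = {1, …, n} and every field k, the height of the binomial edge ideal J_G in R = k[x_1, …, x_n, y_1, …, y_n] equals b_G; that is, hgt(J_G) = min over all subsets S ⊆ [n] of (2·|S| + (n − |S|) − c(S)). -/

import Mathlib

open MvPolynomial

/-- The height of an ideal: the infimum of the heights (in the prime spectrum)
of the prime ideals containing it. -/
noncomputable def idealHeight {R : Type*} [CommRing R] (I : Ideal R) : ℕ∞ :=
  ⨅ (p : PrimeSpectrum R) (_ : I ≤ p.asIdeal), Order.height p

/-- The binomial edge ideal of a graph `G` on `[n]`, inside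
`k[x_1,…,x_n,y_1,…,y_n]`, where `x_i` is the variable `Sum.inl i` and `y_i` is
the variable `Sum.inr i`. -/
noncomputable def binomialEdgeIdeal (n : ℕ) (k : Type*) [Field k]
    (G : SimpleGraph (Fin n)) : Ideal (MvPolynomial (Fin n ⊕ Fin n) k) :=
  Ideal.span {f | ∃ i j : Fin n, G.Adj i j ∧
    f = X (Sum.inl i) * X (Sum.inr j) - X (Sum.inl j) * X (Sum.inr i)}

/-- `c(S)`: the number of connected components of the induced subgraph of `G`
on the complement of `S`. -/
noncomputable def numComponents {n : ℕ} (G : SimpleGraph (Fin n))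
    (S : Finset (Fin n)) : ℕ :=
  Nat.card ((G.induce ((↑S : Set (Fin n))ᶜ)).ConnectedComponent)

/-- `b_G(S) = 2|S| + (n - |S|) - c(S)`. -/
noncomputable def bOf {n : ℕ} (G : SimpleGraph (Fin n)) (S : Finset (Fin n)) : ℕ :=
  2 * S.card + (n - S.card) - numComponents G S

/-- `b_G`: the minimum of `b_G(S)` over all subsets `S ⊆ [n]`. -/
noncomputable def bMin {n : ℕ} (G : SimpleGraph (Fin n)) : ℕ :=
  sInf (Set.range (bOf G))

universe u v

open scoped Polynomial in
lemma height_aux {D : Type*} [CommRing D] [IsDomain D] (Q : Ideal D[X]) [Q.IsPrime]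
    (h0 : Q ≠ ⊥) (h : Q.comap Polynomial.C = ⊥) : Q.height = 1 := by
  let := Polynomial.algebra D (FractionRing D)
  have := Polynomial.isLocalization (nonZeroDivisors D) (FractionRing D)
  have hd : Disjoint (((nonZeroDivisors D).map (Polynomial.C : D →+* D[X]) : Submonoid D[X]) : Set D[X]) (Q : Set D[X]) := by
    refine Set.disjoint_left.mpr fun a ⟨b, hb⟩ ha ↦ ?_
    have : b ∈ Q.comap Polynomial.C := by
      rw [Ideal.mem_comap]
      rw [hb.2]
      exact ha
    rw [h] at this
    exact nonZeroDivisors.ne_zero hb.1 this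
  have e1 := IsLocalization.height_map_of_disjoint (S := (FractionRing D)[X]) _ Q hd
  have hp := IsLocalization.isPrime_of_isPrime_disjoint _ (FractionRing D)[X] Q ‹_› hd
  apply le_antisymm
  · rw [← e1]
    have := Ideal.height_le_ringKrullDim_of_isPrime (I := Q.map (algebraMap D[X] (FractionRing D)[X]))
    have h2 : ringKrullDim (FractionRing D)[X] ≤ 1 := by
      have := Polynomial.ringKrullDim_of_isNoetherianRing (R := FractionRing D)
      rw [this, ringKrullDim_eq_zero_of_field]; simp
    exact_mod_cast this.trans h2
  · rw [Order.one_le_iff_ne_zero, Ne, Ideal.height_eq_zero_iff_eq_bot]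
    exact h0

open scoped Polynomial in
lemma height_step {R : Type*} [CommRing R] [IsNoetherianRing R] (P : Ideal R[X]) [P.IsPrime]
    (h : P ≠ (P.under R).map Polynomial.C) : P.height = (P.under R).height + 1 := by
  rw [Ideal.height_eq_height_add_of_liesOver_of_hasGoingDown (P.under R) P]
  congr 1
  set p := P.under R with hp
  let e : (R[X] ⧸ (p.map (algebraMap R R[X]))) ≃+* (R ⧸ p)[X] :=
    (Ideal.polynomialQuotientEquivQuotientPolynomial p).symm
  set Q := P.map (Ideal.Quotient.mk <| p.map (algebraMap R R[X])) with hQ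
  have hle : p.map (algebraMap R R[X]) ≤ P := Ideal.map_comap_le
  have hcomap : Q.comap (Ideal.Quotient.mk _) = P := by
    rw [hQ, Ideal.comap_map_of_surjective _ Ideal.Quotient.mk_surjective, ← RingHom.ker_eq_comap_bot,
      Ideal.mk_ker]
    exact sup_eq_left.mpr hle
  have : Q.IsPrime := by
    refine Ideal.map_isPrime_of_surjective Ideal.Quotient.mk_surjective ?_
    rwa [Ideal.mk_ker]
  rw [← e.symm.height_comap]
  have hpr : (Q.comap e.symm).IsPrime := Ideal.comap_isPrime _ _
  apply height_aux
  · intro hb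
    apply h
    have : Q = ⊥ := by
      rw [eq_bot_iff]
      intro x hx
      have h3 : e x ∈ Q.comap e.symm := by
        rw [Ideal.mem_comap, RingEquiv.symm_apply_apply]
        exact hx
      rw [hb, Ideal.mem_bot] at h3
      exact (map_eq_zero_iff e e.injective).mp h3
    rw [this, ← RingHom.ker_eq_comap_bot, Ideal.mk_ker] at hcomap
    exact hcomap.symm
  · rw [eq_bot_iff]
    intro a ha
    obtain ⟨a, rfl⟩ := Ideal.Quotient.mk_surjective a
    rw [Ideal.mem_comap, Ideal.mem_comap] at ha
    have : e.symm (Polynomial.C (Ideal.Quotient.mk p a)) = Ideal.Quotient.mk _ (Polynomial.C a) := by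
      simp only [e, RingEquiv.symm_symm]
      rw [← Polynomial.map_C, Ideal.polynomialQuotientEquivQuotientPolynomial_map_mk]
      rfl
    rw [this, ← Ideal.mem_comap, hcomap] at ha
    exact Ideal.Quotient.eq_zero_iff_mem.mpr ha

open scoped Polynomial in
lemma height_step' {R : Type*} [CommRing R] [IsNoetherianRing R] (P : Ideal R[X]) [P.IsPrime]
    (h : P = (P.under R).map Polynomial.C) : P.height = (P.under R).height := by
  rw [Ideal.height_eq_height_add_of_liesOver_of_hasGoingDown (P.under R) P]
  have : P.map (Ideal.Quotient.mk <| (P.under R).map (algebraMap R R[X])) = ⊥ := by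
    rw [Ideal.map_eq_bot_iff_le_ker, Ideal.mk_ker]
    exact h.le
  rw [this]
  have : Nontrivial (R[X] ⧸ (P.under R).map (algebraMap R R[X])) := by
    apply Ideal.Quotient.nontrivial_iff.mpr
    intro hh
    exact Ideal.IsPrime.ne_top ‹P.IsPrime› (h.trans hh)
  simp

lemma isAlgebraic_of_gens {B A : Type*} [CommRing B] [IsDomain B] [CommRing A] [Algebra B A]
    (s : Set A) (hs : Algebra.adjoin B s = ⊤) (h : ∀ a ∈ s, IsAlgebraic B a) :
    Algebra.IsAlgebraic B A := by
  constructor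
  intro x
  have : Algebra.adjoin B s ≤ Subalgebra.algebraicClosure B A := Algebra.adjoin_le h
  rw [hs] at this
  exact this (Algebra.mem_top : x ∈ (⊤ : Subalgebra B A))

open scoped Polynomial in
lemma trdeg_step {R : Type*} [CommRing R] (P : Ideal R[X]) [P.IsPrime]
    (h : P ≠ (P.under R).map Polynomial.C) : Algebra.trdeg (R ⧸ P.under R) (R[X] ⧸ P) = 0 := by
  suffices Algebra.IsAlgebraic (R ⧸ P.under R) (R[X] ⧸ P) from _root_.trdeg_eq_zero
  apply isAlgebraic_of_gens {Ideal.Quotient.mk P Polynomial.X}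
  · rw [eq_top_iff]
    intro x _
    obtain ⟨f, rfl⟩ := Ideal.Quotient.mk_surjective x
    induction f using Polynomial.induction_on' with
    | add p q hp hq => rw [map_add]; exact add_mem (hp trivial) (hq trivial)
    | monomial n a =>
      rw [← Polynomial.C_mul_X_pow_eq_monomial, map_mul, map_pow]
      refine mul_mem ?_ (pow_mem (Algebra.self_mem_adjoin_singleton _ _) _)
      exact Subalgebra.algebraMap_mem _ (Ideal.Quotient.mk (P.under R) a)
  · rintro _ rfl
    have hle : (P.under R).map (algebraMap R R[X]) ≤ P := Ideal.map_comap_le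
    obtain ⟨f, hfP, hf⟩ := SetLike.exists_of_lt (lt_of_le_of_ne hle (Ne.symm h))
    refine ⟨f.map (Ideal.Quotient.mk _), ?_, ?_⟩
    · intro h0
      apply hf
      rw [Polynomial.algebraMap_eq, Ideal.mem_map_C_iff (I := P.under R)]
      intro n
      have := congrArg (fun g => g.coeff n) h0
      simpa [Ideal.Quotient.eq_zero_iff_mem] using this
    · rw [Polynomial.aeval_def, Polynomial.eval₂_map]
      have : (algebraMap (R ⧸ P.under R) (R[X] ⧸ P)).comp (Ideal.Quotient.mk (P.under R)) =
        (Ideal.Quotient.mk P).comp Polynomial.C := by ext; rfl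
      rw [this, ← Polynomial.hom_eval₂, Polynomial.eval₂_C_X]
      exact Ideal.Quotient.eq_zero_iff_mem.mpr hfP

open scoped Polynomial in
lemma trdeg_step' {R : Type*} [CommRing R] (P : Ideal R[X]) [P.IsPrime]
    (h : P = (P.under R).map Polynomial.C) : Algebra.trdeg (R ⧸ P.under R) (R[X] ⧸ P) = 1 := by
  rw [← Polynomial.trdeg_of_isDomain (R := R ⧸ P.under R)]
  symm
  let e := (Ideal.polynomialQuotientEquivQuotientPolynomial (P.under R)).trans (Ideal.quotEquivOfEq h.symm)
  apply AlgEquiv.trdeg_eq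
  refine AlgEquiv.ofRingEquiv (f := e) ?_
  intro r
  obtain ⟨r, rfl⟩ := Ideal.Quotient.mk_surjective r
  simp only [e, RingEquiv.trans_apply, Polynomial.algebraMap_apply, Algebra.algebraMap_self_apply]
  rw [← Polynomial.map_C, Ideal.polynomialQuotientEquivQuotientPolynomial_map_mk]
  rfl

def DimFormula (k R : Type*) [Field k] [CommRing R] [Algebra k R] (N : ℕ) : Prop :=
  IsNoetherianRing R ∧ ∀ P : Ideal R, P.IsPrime →
    ∃ h t : ℕ, P.height = h ∧ Algebra.trdeg k (R ⧸ P) = t ∧ h + t = N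

lemma DimFormula.field (k : Type*) [Field k] : DimFormula k k 0 := by
  refine ⟨inferInstance, fun P hP => ⟨0, 0, ?_, ?_, rfl⟩⟩
  · have : P = ⊥ := (Ideal.eq_bot_or_top P).resolve_right hP.ne_top
    subst this; simp
  · have : Algebra.IsAlgebraic k (k ⧸ P) := inferInstance
    simpa using (_root_.trdeg_eq_zero (R := k) (A := k ⧸ P))

lemma DimFormula.equiv {k : Type*} {R S : Type v} [Field k] [CommRing R] [Algebra k R] [CommRing S] [Algebra k S]
    {N : ℕ} (H : DimFormula k R N) (e : R ≃ₐ[k] S) : DimFormula k S N := by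
  have := H.1
  refine ⟨isNoetherianRing_of_ringEquiv R e.toRingEquiv, fun P hP => ?_⟩
  obtain ⟨h, t, h1, h2, h3⟩ := H.2 (P.comap e.toRingEquiv) (Ideal.comap_isPrime _ _)
  refine ⟨h, t, ?_, ?_, h3⟩
  · rw [← h1, RingEquiv.height_comap]
  · rw [← h2]
    symm
    apply AlgEquiv.trdeg_eq
    refine Ideal.quotientEquivAlg _ _ e ?_
    exact (Ideal.map_comap_of_surjective _ e.surjective P).symm

open scoped Polynomial in
lemma DimFormula.poly {k R : Type*} [Field k] [CommRing R] [Algebra k R]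
    {N : ℕ} (H : DimFormula k R N) : DimFormula k R[X] (N + 1) := by
  have := H.1
  refine ⟨inferInstance, fun P hP => ?_⟩
  obtain ⟨h, t, h1, h2, h3⟩ := H.2 (P.under R) inferInstance
  have key := _root_.trdeg_add_eq k (R ⧸ P.under R) (A := R[X] ⧸ P)
  by_cases hc : P = (P.under R).map Polynomial.C
  · refine ⟨h, t + 1, ?_, ?_, by omega⟩
    · rw [height_step' P hc, h1]
    · rw [← key, h2, trdeg_step' P hc]; simp
  · refine ⟨h + 1, t, ?_, ?_, by omega⟩
    · rw [height_step P hc, h1]; simp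
    · rw [← key, h2, trdeg_step P hc]; simp

lemma dimFormula_mvPolynomial (k : Type u) [Field k] (σ : Type) [Finite σ] :
    DimFormula k (MvPolynomial σ k) (Nat.card σ) := by
  induction σ using Finite.induction_empty_option with
  | of_equiv e H => rw [← Nat.card_congr e]; exact H.equiv (MvPolynomial.renameEquiv k e)
  | h_empty =>
    rw [Nat.card_of_isEmpty]
    exact (DimFormula.field k).equiv (MvPolynomial.isEmptyAlgEquiv k PEmpty).symm
  | h_option IH =>
    rw [Finite.card_option]
    exact IH.poly.equiv (MvPolynomial.optionEquivLeft _ _).symm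

lemma parallel_of_reachable {n : ℕ} {k : Type*} [Field k] {A : Type*} [CommRing A] [IsDomain A]
    (G : SimpleGraph (Fin n)) (S : Set (Fin n)) (x y : Fin n → A)
    (hadj : ∀ i j, G.Adj i j → x i * y j = x j * y i)
    (hS : ∀ i, i ∉ S → x i ≠ 0 ∨ y i ≠ 0)
    (i j : (Sᶜ : Set (Fin n))) (h : (G.induce Sᶜ).Reachable i j) :
    x i * y j = x j * y i := by
  obtain ⟨w⟩ := h
  induction w with
  | nil => rfl
  | @cons u v w huv p ih =>
    have h1 : x u * y v = x v * y u := hadj _ _ huv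
    rcases hS v v.2 with h0 | h0
    · apply mul_left_cancel₀ h0
      linear_combination x u * ih + x w * h1
    · apply mul_left_cancel₀ h0
      linear_combination y u * ih + y w * h1

lemma lower {n : ℕ} {k : Type*} [Field k] (G : SimpleGraph (Fin n))
    (P : Ideal (MvPolynomial (Fin n ⊕ Fin n) k)) [P.IsPrime] (hP : binomialEdgeIdeal n k G ≤ P) :
    ∃ S : Finset (Fin n), Algebra.trdeg k (MvPolynomial (Fin n ⊕ Fin n) k ⧸ P) ≤
      ((n - S.card + numComponents G S : ℕ) : Cardinal) := by
  classical
  let A := MvPolynomial (Fin n ⊕ Fin n) k ⧸ P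
  let x : Fin n → A := fun i => Ideal.Quotient.mk P (X (Sum.inl i))
  let y : Fin n → A := fun i => Ideal.Quotient.mk P (X (Sum.inr i))
  let S : Finset (Fin n) := Finset.univ.filter fun i => x i = 0 ∧ y i = 0
  refine ⟨S, ?_⟩
  have hadj : ∀ i j, G.Adj i j → x i * y j = x j * y i := by
    intro i j hij
    rw [← sub_eq_zero]
    simp only [x, y, ← map_mul, ← map_sub]
    exact Ideal.Quotient.eq_zero_iff_mem.mpr (hP (Ideal.subset_span ⟨i, j, hij, rfl⟩))
  have hS : ∀ i, i ∉ (S : Set (Fin n)) → x i ≠ 0 ∨ y i ≠ 0 := by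
    intro i hi
    simp only [S, Finset.coe_filter, Finset.mem_univ, true_and, Set.mem_ofPred_eq] at hi
    tauto
  have hpar := parallel_of_reachable (k := k) G (S : Set (Fin n)) x y hadj hS
  let H := G.induce ((S : Set (Fin n))ᶜ)
  let V : Type := (((S : Set (Fin n))ᶜ : Set (Fin n)) : Type)
  let rep : H.ConnectedComponent → V := fun c => Quot.out c
  have hrep : ∀ i : V, H.Reachable i (rep (H.connectedComponentMk i)) := by
    intro i
    rw [← SimpleGraph.ConnectedComponent.eq]
    exact (Quot.out_eq (H.connectedComponentMk i)).symm
  let z : V → A := fun i => if x (rep (H.connectedComponentMk i)) ≠ 0 then x i else y i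
  let w : H.ConnectedComponent → A := fun c => if x (rep c) ≠ 0 then y (rep c) else 0
  let s : Set A := Set.range (Sum.elim z w)
  have hz : ∀ i, z i ∈ Algebra.adjoin k s := fun i => Algebra.subset_adjoin ⟨Sum.inl i, rfl⟩
  have hw : ∀ c, w c ∈ Algebra.adjoin k s := fun c => Algebra.subset_adjoin ⟨Sum.inr c, rfl⟩
  have hrr : ∀ c, H.connectedComponentMk (rep c) = c := fun c => Quot.out_eq c
  have halg0 : ∀ a ∈ Algebra.adjoin k s, IsAlgebraic (Algebra.adjoin k s) a := fun a ha =>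
    isAlgebraic_algebraMap (⟨a, ha⟩ : Algebra.adjoin k s)
  have hxy : ∀ i, IsAlgebraic (Algebra.adjoin k s) (x i) ∧ IsAlgebraic (Algebra.adjoin k s) (y i) := by
    intro i
    by_cases hi : i ∈ S
    · have : x i = 0 ∧ y i = 0 := by simpa [S] using hi
      rw [this.1, this.2]
      exact ⟨isAlgebraic_zero, isAlgebraic_zero⟩
    · let i' : V := ⟨i, by simpa using hi⟩
      let r := rep (H.connectedComponentMk i')
      have hp : x i * y r = x r * y i := hpar i' r (hrep i')
      by_cases hr : x r ≠ 0
      · have h1 : x i ∈ Algebra.adjoin k s := by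
          have := hz i'
          simp only [z] at this
          rwa [if_pos hr] at this
        have h2 : x r ∈ Algebra.adjoin k s := by
          have := hz r
          simp only [z, r, hrr] at this
          rwa [if_pos hr] at this
        have h3 : y r ∈ Algebra.adjoin k s := by
          have := hw (H.connectedComponentMk i')
          simp only [w] at this
          rwa [if_pos hr] at this
        refine ⟨halg0 _ h1, ?_⟩
        have h4 : IsAlgebraic (Algebra.adjoin k s) (x r * y i) := by
          rw [← hp]; exact halg0 _ (mul_mem h1 h3)
        refine IsAlgebraic.of_mul ?_ (halg0 _ h2) h4
        exact mem_nonZeroDivisors_of_ne_zero hr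
      · have h1 : y i ∈ Algebra.adjoin k s := by
          have := hz i'
          simp only [z] at this
          rwa [if_neg hr] at this
        refine ⟨?_, halg0 _ h1⟩
        push Not at hr
        have h2 : y r ≠ 0 := (hS r r.2).resolve_left (by simpa using hr)
        rw [hr, zero_mul] at hp
        rw [(mul_eq_zero.mp hp).resolve_right h2]
        exact isAlgebraic_zero
  have halg : Algebra.IsAlgebraic (Algebra.adjoin k s) A := by
    constructor
    intro a
    obtain ⟨f, rfl⟩ := Ideal.Quotient.mk_surjective a
    have : Ideal.Quotient.mk P f ∈ Subalgebra.algebraicClosure (Algebra.adjoin k s) A := by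
      induction f using MvPolynomial.induction_on with
      | C a =>
        have : (Ideal.Quotient.mk P) (C a) = algebraMap k A a := rfl
        rw [this]
        exact halg0 _ (Subalgebra.algebraMap_mem _ a)
      | add p q hp hq => rw [map_add]; exact add_mem hp hq
      | mul_X p i hp =>
        rw [map_mul]
        refine mul_mem hp ?_
        rcases i with i | i
        · exact (hxy i).1
        · exact (hxy i).2
    exact this
  refine (Algebra.IsAlgebraic.trdeg_le_cardinalMk k s).trans ?_
  have h1 : Cardinal.lift.{0} (Cardinal.mk s) ≤ Cardinal.lift (Cardinal.mk (V ⊕ H.ConnectedComponent)) :=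
    Cardinal.mk_range_le_lift
  rw [Cardinal.lift_id'] at h1
  refine h1.trans (le_of_eq ?_)
  rw [← Nat.cast_card, Nat.card_sum, Cardinal.lift_natCast]
  have : Nat.card V = n - S.card := by
    rw [Nat.card_coe_set_eq, Set.ncard_compl, Set.ncard_coe_finset, Nat.card_fin]
  rw [this]
  rfl

lemma upper {n : ℕ} {k : Type*} [Field k] (G : SimpleGraph (Fin n)) (S : Finset (Fin n)) :
    ∃ P : Ideal (MvPolynomial (Fin n ⊕ Fin n) k), P.IsPrime ∧ binomialEdgeIdeal n k G ≤ P ∧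
      Algebra.trdeg k (MvPolynomial (Fin n ⊕ Fin n) k ⧸ P) =
      ((n - S.card + numComponents G S : ℕ) : Cardinal) := by
  classical
  let H := G.induce ((S : Set (Fin n))ᶜ)
  let V : Type := (((S : Set (Fin n))ᶜ : Set (Fin n)) : Type)
  let B := MvPolynomial (V ⊕ H.ConnectedComponent) k
  let x : Fin n → B := fun i => if h : i ∈ ((S : Set (Fin n))ᶜ : Set (Fin n)) then
    X (Sum.inl (⟨i, h⟩ : V)) else 0
  let y : Fin n → B := fun i => if h : i ∈ ((S : Set (Fin n))ᶜ : Set (Fin n)) then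
    X (Sum.inl (⟨i, h⟩ : V)) * X (Sum.inr (H.connectedComponentMk ⟨i, h⟩)) else 0
  let φ : MvPolynomial (Fin n ⊕ Fin n) k →ₐ[k] B := aeval (Sum.elim x y)
  have hφx : ∀ i, φ (X (Sum.inl i)) = x i := fun i => by simp [φ]
  have hφy : ∀ i, φ (X (Sum.inr i)) = y i := fun i => by simp [φ]
  refine ⟨RingHom.ker φ, RingHom.ker_isPrime _, ?_, ?_⟩
  · rw [binomialEdgeIdeal, Ideal.span_le]
    rintro _ ⟨i, j, hij, rfl⟩
    rw [SetLike.mem_coe, RingHom.mem_ker, map_sub, map_mul, map_mul, hφx, hφx, hφy, hφy]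
    by_cases hi : i ∈ ((S : Set (Fin n))ᶜ : Set (Fin n))
    · by_cases hj : j ∈ ((S : Set (Fin n))ᶜ : Set (Fin n))
      · have : H.connectedComponentMk ⟨i, hi⟩ = H.connectedComponentMk ⟨j, hj⟩ := by
          rw [SimpleGraph.ConnectedComponent.eq]
          exact SimpleGraph.Adj.reachable hij
        simp only [x, y, dif_pos hi, dif_pos hj, this]
        ring
      · simp only [x, y, dif_neg hj]; ring
    · simp only [x, y, dif_neg hi]; ring
  · rw [(Ideal.quotientKerEquivRange φ).trdeg_eq]
    have key := _root_.trdeg_add_eq k φ.range (A := B)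
    have halg : Algebra.IsAlgebraic φ.range B := by
      have hl : ∀ v : V, (X (Sum.inl v) : B) ∈ φ.range := by
        intro v
        refine ⟨X (Sum.inl v.1), ?_⟩
        refine (hφx _).trans ?_
        simp only [x, dif_pos v.2]; rfl
      have halg0 : ∀ a ∈ φ.range, IsAlgebraic φ.range a := fun a ha =>
        isAlgebraic_algebraMap (⟨a, ha⟩ : φ.range)
      constructor
      intro f
      have : f ∈ Subalgebra.algebraicClosure φ.range B := by
        induction f using MvPolynomial.induction_on with
        | C a => exact halg0 _ (Subalgebra.algebraMap_mem φ.range a)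
        | add p q hp hq => exact add_mem hp hq
        | mul_X p i hp =>
          refine mul_mem hp ?_
          rcases i with v | c
          · exact halg0 _ (hl v)
          · induction c using SimpleGraph.ConnectedComponent.ind with
            | h v =>
              refine IsAlgebraic.of_mul (y := X (Sum.inl v)) ?_ (halg0 _ (hl v)) ?_
              · exact mem_nonZeroDivisors_of_ne_zero (X_ne_zero _)
              · apply halg0
                refine ⟨X (Sum.inr v.1), ?_⟩
                refine (hφy _).trans ?_
                simp only [y, dif_pos v.2]
      exact this
    rw [_root_.trdeg_eq_zero (R := φ.range) (A := B), add_zero] at key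
    rw [key, MvPolynomial.trdeg_of_isDomain, ← Nat.cast_card, Nat.card_sum, Cardinal.lift_natCast]
    have : Nat.card V = n - S.card := by
      rw [Nat.card_coe_set_eq, Set.ncard_compl, Set.ncard_coe_finset, Nat.card_fin]
    rw [this]
    rfl

theorem height_binomialEdgeIdeal_eq_bMin (n : ℕ) (k : Type*) [Field k]
    (G : SimpleGraph (Fin n)) :
    idealHeight (binomialEdgeIdeal n k G) = (bMin G : ℕ∞) := by
  have D := (dimFormula_mvPolynomial k (Fin n ⊕ Fin n)).2
  have hcard : Nat.card (Fin n ⊕ Fin n) = n + n := by simp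
  have hSle : ∀ S : Finset (Fin n), S.card ≤ n := fun S => by simpa using S.card_le_univ
  apply le_antisymm
  · obtain ⟨S, hS⟩ : bMin G ∈ Set.range (bOf G) := Nat.sInf_mem (Set.range_nonempty _)
    obtain ⟨P, hP, hle, ht⟩ := upper (k := k) G S
    refine (iInf₂_le (⟨P, hP⟩ : PrimeSpectrum _) hle).trans ?_
    rw [← PrimeSpectrum.height_eq_orderHeight]
    obtain ⟨h, t, h1, h2, h3⟩ := D P hP
    change P.height ≤ _
    rw [h1, ← hS]
    rw [h2] at ht
    have ht' : t = n - S.card + numComponents G S := by exact_mod_cast ht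
    have := hSle S
    norm_cast
    unfold bOf
    omega
  · refine le_iInf₂ fun p hp => ?_
    rw [← PrimeSpectrum.height_eq_orderHeight]
    obtain ⟨S, ht⟩ := lower G p.asIdeal hp
    obtain ⟨h, t, h1, h2, h3⟩ := D p.asIdeal p.2
    rw [h2] at ht
    have ht' : t ≤ n - S.card + numComponents G S := by exact_mod_cast ht
    have := hSle S
    have hb : bMin G ≤ bOf G S := Nat.sInf_le ⟨S, rfl⟩
    rw [h1]
    norm_cast
    refine hb.trans ?_
    unfold bOf
    omega
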